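/- arXiv:1304.7709 — 6 statements merged into one kernel-verified Lean document; each statement's English description precedes it below -/
import Mathlib

section
/- For every positive integer N there exists a vector φ ∈ ℂ^N such that the Gabor system (φ, (ℤ/Nℤ)²) is in general linear position; that is, for every subset Λ ⊆ (ℤ/Nℤ)² with |Λ| = N, the N vectors {π(κ,λ)φ : (κ,λ) ∈ Λ} form a basis of ℂ^N. -/
/-!
Let `φ_j = x ^ f(j)` for `0 ≤ j < N`, with `f(r) = r² + N r`. For each `Λ` with `N` elements the
determinant of the vectors `π(κ,λ)φ` is a polynomial in `x`; once all these finitely many polynomials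
are known to be nonzero, any `x` outside their roots works.

Fix `Λ`. By the cycle lemma (`exists_shift`) and sorting, the time shifts may be listed, relative to a
suitable origin `s`, as `K_0 ≤ K_1 ≤ … ≤ K_{N-1}` with `K_j ≤ j`. A term of the Leibniz expansion
matches each column with a row, and its exponent is the sum of the `f((row - K) mod N)`.
Since `f(d mod N) ≥ d² + N d` for every integer `d` with `|d| < N`, with equality for `d ≥ 0`, the
rearrangement inequality shows that the exponent of the sorted matching is attained only by matchings
that differ from it by permuting columns of equal `K` (`matching_unique`). Hence the coefficient at
this exponent is the determinant of a block diagonal matrix. Each block consists of consecutive rows of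
the Fourier matrix at distinct frequencies, so it is of Vandermonde type and nonsingular
(`det_block_ne_zero`).
-/

/-- The time-frequency shift `π(κ,λ) = M^λ T^κ` applied to a vector `x ∈ ℂ^N`:
`(π(κ,λ) x)_j = ω^{jλ} x_{j-κ}`, where `ω = e^{2πi/N}`. -/
noncomputable def gabor (N : ℕ) (κ lam : ZMod N) (x : ZMod N → ℂ) : ZMod N → ℂ :=
  fun j => Complex.exp (2 * Real.pi * Complex.I / N) ^ (j * lam).val * x (j - κ)

/-- The Gabor system `(φ, (ℤ/Nℤ)²)` is in general linear position: for every
`Λ ⊆ (ℤ/Nℤ)²` with `|Λ| = N`, the vectors `π(κ,λ)φ`, `(κ,λ) ∈ Λ`, form a basis of `ℂ^N`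
(i.e. they are linearly independent and span). -/
def InGeneralLinearPosition (N : ℕ) (φ : ZMod N → ℂ) : Prop :=
  ∀ Λ : Finset (ZMod N × ZMod N), Λ.card = N →
    LinearIndependent ℂ (fun p : {x // x ∈ Λ} => gabor N p.1.1 p.1.2 φ) ∧
    Submodule.span ℂ (Set.range fun p : {x // x ∈ Λ} => gabor N p.1.1 p.1.2 φ) = ⊤

open Polynomial

/-! ### Cyclic shifts -/

/-- The cycle lemma: after a cyclic shift, `N` points of `ℤ/Nℤ` (with multiplicity) form
a parking function. The right
shift minimises the partial sums of (number of points at `r`) `- 1`, which are periodic because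
there are exactly `N` points. -/
theorem exists_shift (N : ℕ) [NeZero N] (c : Fin N → ZMod N) :
    ∃ s : ZMod N, ∀ m ≤ N, m ≤ (Finset.univ.filter fun j => (c j - s).val < m).card := by
  classical
  set F : ℕ → ℤ := fun t =>
    ∑ r ∈ Finset.range t, (((Finset.univ.filter fun j => c j = (r : ZMod N)).card : ℤ) - 1) with hF
  have key : ∀ s m : ℕ, m ≤ N →
      ((Finset.univ.filter fun j => (c j - (s : ZMod N)).val < m).card : ℤ) =
        F (s + m) - F s + m := by
    intro s m hm
    rw [Finset.card_eq_sum_card_fiberwise (f := fun j => (c j - (s : ZMod N)).val)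
      (t := Finset.range m) (fun j hj => by simpa using hj)]
    have h1 : F (s + m) - F s = ∑ r ∈ Finset.range m,
        (((Finset.univ.filter fun j => c j = ((s + r : ℕ) : ZMod N)).card : ℤ) - 1) := by
      simp only [hF, Finset.sum_range_add, add_sub_cancel_left]
    rw [h1, Finset.sum_sub_distrib]
    simp only [Finset.sum_const, Finset.card_range, nsmul_eq_mul, mul_one, sub_add_cancel]
    push_cast
    refine Finset.sum_congr rfl fun r hr => ?_
    have hrm : r < m := Finset.mem_range.1 hr
    congr 2
    ext j
    simp only [Finset.mem_filter, Finset.mem_univ, true_and]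
    constructor
    · rintro ⟨-, h⟩
      have : c j - s = (r : ZMod N) := by rw [← h, ZMod.natCast_zmod_val]
      rw [← this]; ring
    · intro h
      have : c j - s = (r : ZMod N) := by rw [h]; ring
      rw [this, ZMod.val_natCast_of_lt (by omega)]
      exact ⟨hrm, rfl⟩
  have per : ∀ s, F (s + N) = F s := by
    intro s
    have := key s N le_rfl
    rw [Finset.filter_true_of_mem (fun j _ => ZMod.val_lt _)] at this
    simp at this
    linarith
  obtain ⟨s, hs, hmin⟩ := Finset.exists_min_image (Finset.range N) F
    ⟨0, by simpa using Nat.pos_of_ne_zero (NeZero.ne N)⟩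
  refine ⟨(s : ZMod N), fun m hm => ?_⟩
  have h1 := key s m hm
  have h2 : F s ≤ F (s + m) := by
    rcases lt_or_ge (s + m) N with h | h
    · exact hmin _ (by simpa using h)
    · have h3 := hmin (s + m - N) (by simp at hs ⊢; omega)
      have h4 := per (s + m - N)
      rw [Nat.sub_add_cancel h] at h4
      omega
  omega

/-! ### Uniqueness of the optimal matching -/

/-- The exponent attached to a residue. The term `r ^ 2` makes it strictly convex on `[0, N)`, and
the term `N * r` makes a wrap-around modulo `N` never cheaper than the same expression evaluated at
a negative integer. -/
def wt {N : ℕ} (r : ZMod N) : ℕ := r.val ^ 2 + N * r.val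

/-- Among all matchings of rows with the points `K`, those of the same total weight as the sorted
one agree with it up to permuting equal points. The weight of a matching is at least
`∑ (σ i - K i) ^ 2 + N * ∑ (σ i - K i)`, with equality for the sorted matching, so the claim is the
equality case of the rearrangement inequality. -/
theorem matching_unique {N : ℕ} [NeZero N] {K : Fin N → ℕ} (hK : Monotone K)
    (hle : ∀ j, K j ≤ j) (σ : Equiv.Perm (Fin N))
    (h : ∑ i, wt (((σ i : ℕ) : ZMod N) - (K i : ZMod N)) =
      ∑ i : Fin N, wt (((i : ℕ) : ZMod N) - (K i : ZMod N))) (i : Fin N) :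
    K (σ i) = K i := by
  have hv : ∀ i j : Fin N, K i ≤ j → (((j : ℕ) : ZMod N) - (K i : ZMod N)).val = j - K i := by
    intro i j hij
    rw [← Nat.cast_sub hij, ZMod.val_natCast_of_lt (by omega)]
  have hv' : ∀ i j : Fin N, (j : ℕ) < K i →
      (((j : ℕ) : ZMod N) - (K i : ZMod N)).val = j + N - K i := by
    intro i j hij
    have := hle i
    have h2 : (((j : ℕ) : ZMod N) - (K i : ZMod N)) = ((j + N - K i : ℕ) : ZMod N) := by
      rw [Nat.cast_sub (by omega)]; simp
    rw [h2, ZMod.val_natCast_of_lt (by omega)]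
  have hge : ∀ i j : Fin N, ((j : ℤ) - K i) ^ 2 + N * ((j : ℤ) - K i) ≤
      (wt (((j : ℕ) : ZMod N) - (K i : ZMod N)) : ℤ) := by
    intro i j
    rcases le_or_gt (K i) j with hij | hij
    · rw [wt, hv i j hij]; push_cast [Nat.cast_sub hij]; exact le_rfl
    · have h1 := hle i
      rw [wt, hv' i j hij]; push_cast [Nat.cast_sub (show K i ≤ j + N by omega)]
      have : (K i : ℤ) < N := by omega
      nlinarith
  have h1 : ∑ i, (((σ i : ℕ) : ℤ) - K i) ^ 2 + ∑ i, N * (((σ i : ℕ) : ℤ) - K i) ≤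
      ∑ i : Fin N, (((i : ℕ) : ℤ) - K i) ^ 2 + ∑ i : Fin N, N * (((i : ℕ) : ℤ) - K i) := by
    rw [← Finset.sum_add_distrib, ← Finset.sum_add_distrib]
    calc _ ≤ _ := Finset.sum_le_sum fun i _ => hge i (σ i)
      _ = ∑ i : Fin N, (wt (((i : ℕ) : ZMod N) - (K i : ZMod N)) : ℤ) := by exact_mod_cast h
      _ = _ := Finset.sum_congr rfl fun i _ => by
        rw [wt, hv i i (hle i)]; push_cast [Nat.cast_sub (hle i)]; rfl
  have e1 : ∑ i, ((σ i : ℕ) : ℤ) = ∑ i : Fin N, ((i : ℕ) : ℤ) :=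
    Equiv.sum_comp σ fun i : Fin N => ((i : ℕ) : ℤ)
  have e2 : ∑ i, ((σ i : ℕ) : ℤ) ^ 2 = ∑ i : Fin N, ((i : ℕ) : ℤ) ^ 2 :=
    Equiv.sum_comp σ fun i : Fin N => ((i : ℕ) : ℤ) ^ 2
  simp only [sub_sq, Finset.sum_add_distrib, Finset.sum_sub_distrib, ← Finset.mul_sum, e1, e2,
    mul_assoc] at h1
  set f : Fin N → ℤ := fun i => (K i : ℤ) with hf
  set g : Fin N → ℤ := fun i => ((i : ℕ) : ℤ) with hg
  have mono : Monovary f g := fun i j hij => by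
    simp only [hf, hg] at hij ⊢
    exact_mod_cast hK (by exact_mod_cast (show i < j by exact_mod_cast hij).le)
  have h2 : ∑ i, f i * g (σ i) = ∑ i, f i * g i := by
    refine le_antisymm mono.sum_mul_comp_perm_le_sum_mul ?_
    have a1 : ∑ i, f i * g (σ i) = ∑ i, ((σ i : ℕ) : ℤ) * K i :=
      Finset.sum_congr rfl fun i _ => mul_comm _ _
    have a2 : ∑ i, f i * g i = ∑ i : Fin N, ((i : ℕ) : ℤ) * K i :=
      Finset.sum_congr rfl fun i _ => mul_comm _ _
    rw [a1, a2]; linarith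
  rw [mono.sum_mul_comp_perm_eq_sum_mul_iff] at h2
  have h3 : Monotone (K ∘ σ.symm) := by
    intro a b hab
    rcases hab.eq_or_lt with rfl | hab
    · exact le_rfl
    · have := @h2 (σ.symm a) (σ.symm b) (by simp [hg]; exact_mod_cast hab)
      simpa [hf] using this
  have h4 := Tuple.unique_monotone (f := K) (σ := σ.symm) (τ := 1) h3 hK
  have := congrFun h4 (σ i)
  simpa using this.symm

/-! ### Nonvanishing of the determinant -/

/-- A matrix supported on the blocks `K i = K j` is invertible if each block is a (rescaled)
Vandermonde matrix on consecutive powers. A vector in the left kernel gives, on each block, a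
polynomial of degree less than the block size vanishing at all nodes of the block. -/
theorem det_block_ne_zero {N : ℕ} {K : Fin N → ℕ} (hK : Monotone K) {z w : Fin N → ℂ}
    (hw : ∀ j, w j ≠ 0) (hz : ∀ j, z j ≠ 0) (hinj : ∀ i j, K i = K j → z i = z j → i = j) :
    (Matrix.of fun i j : Fin N => if K i = K j then w j * z j ^ (i : ℕ) else 0).det ≠ 0 := by
  classical
  intro h0
  obtain ⟨u, hu, hu0⟩ := Matrix.exists_vecMul_eq_zero_iff.2 h0
  apply hu
  ext i
  set S := Finset.univ.filter fun k => K k = K i with hS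
  have hiS : i ∈ S := by simp [hS]
  obtain ⟨i0, hi0, hmin⟩ := Finset.exists_min_image S id ⟨i, hiS⟩
  simp only [id] at hmin
  have hK0 : K i0 = K i := by simpa [hS] using hi0
  set p : ℂ[X] := ∑ k ∈ S, C (u k) * X ^ ((k : ℕ) - i0) with hp
  have hdeg : p.degree < S.card := by
    rw [hp]
    refine (degree_sum_le _ _).trans_lt ?_
    rw [Finset.sup_lt_iff (by simp)]
    intro k hk
    refine (degree_C_mul_X_pow_le _ _).trans_lt ?_
    -- `K` is monotone, so `S` is an interval and `k - i0` is less than its cardinality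
    have hsub : Finset.Icc i0 k ⊆ S := by
      intro m hm
      rw [Finset.mem_Icc] at hm
      have hKk : K k = K i := by simpa [hS] using hk
      have := hK hm.1
      have := hK hm.2
      simp [hS]; omega
    have := Finset.card_le_card hsub
    rw [Fin.card_Icc] at this
    have h3 : i0 ≤ k := hmin k hk
    have h3' : (i0 : ℕ) ≤ k := h3
    exact_mod_cast (show (k : ℕ) - i0 < S.card by omega)
  have hp0 : p = 0 := by
    refine eq_zero_of_degree_lt_of_eval_index_eq_zero S (v := z) ?_ hdeg ?_
    · intro a ha b hb hab
      simp only [hS, Finset.coe_filter, Finset.mem_univ, true_and, Set.mem_ofPred_eq] at ha hb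
      exact hinj a b (ha.trans hb.symm) hab
    · intro j hj
      have hKj : K j = K i := by simpa [hS] using hj
      have h1 := congrFun hu0 j
      simp only [Matrix.vecMul, dotProduct, Matrix.of_apply, mul_ite, mul_zero, Pi.zero_apply,
        hKj, ← Finset.sum_filter] at h1
      have h2 : w j * z j ^ (i0 : ℕ) * p.eval (z j) = 0 := by
        rw [← h1, hp, eval_finsetSum, Finset.mul_sum]
        refine Finset.sum_congr rfl fun k hk => ?_
        have h3 : i0 ≤ k := hmin k hk
        have h3' : (i0 : ℕ) ≤ k := h3
        simp only [eval_mul, eval_C, eval_pow, eval_X]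
        rw [← Nat.sub_add_cancel h3', pow_add, Nat.add_sub_cancel]
        ring
      exact (mul_eq_zero.1 h2).resolve_left (mul_ne_zero (hw j) (pow_ne_zero _ (hz j)))
  have hc : p.coeff ((i : ℕ) - i0) = u i := by
    rw [hp, finsetSum_coeff, Finset.sum_eq_single i]
    · simp
    · intro k hk hki
      have h3 : i0 ≤ k := hmin k hk
      have h4 : i0 ≤ i := hmin i hiS
      have h3' : (i0 : ℕ) ≤ k := h3
      have h4' : (i0 : ℕ) ≤ i := h4
      have h5 : (k : ℕ) ≠ i := fun h => hki (Fin.ext h)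
      rw [coeff_C_mul, coeff_X_pow, if_neg (by omega), mul_zero]
    · exact fun h => (h hiS).elim
  rw [← hc, hp0]; simp

/-- The coefficient of the weight of the sorted matching in the Leibniz expansion is the block
determinant of `det_block_ne_zero`, by `matching_unique`. -/
theorem det_poly_ne_zero {N : ℕ} [NeZero N] {K : Fin N → ℕ} (hK : Monotone K)
    (hle : ∀ j, K j ≤ j) {z w : Fin N → ℂ}
    (hw : ∀ j, w j ≠ 0) (hz : ∀ j, z j ≠ 0) (hinj : ∀ i j, K i = K j → z i = z j → i = j) :
    (Matrix.of fun i j : Fin N => C (w j * z j ^ (i : ℕ)) *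
      (X : ℂ[X]) ^ wt (((i : ℕ) : ZMod N) - (K j : ZMod N))).det ≠ 0 := by
  classical
  intro h0
  apply det_block_ne_zero hK hw hz hinj
  have h1 := congrArg (fun q : ℂ[X] => q.coeff
    (∑ i : Fin N, wt (((i : ℕ) : ZMod N) - (K i : ZMod N)))) h0
  simp only [coeff_zero] at h1
  refine Eq.trans ?_ h1
  rw [Matrix.det_apply, Matrix.det_apply, finsetSum_coeff]
  refine Finset.sum_congr rfl fun σ _ => ?_
  rw [coeff_smul]
  congr 1
  simp only [Matrix.of_apply]
  rw [Finset.prod_mul_distrib, Finset.prod_pow_eq_pow_sum, ← map_prod, coeff_C_mul, coeff_X_pow]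
  by_cases hσ : ∀ i, K (σ i) = K i
  · rw [if_pos, mul_one]
    · exact Finset.prod_congr rfl fun i _ => by rw [if_pos (hσ i)]
    · rw [← Equiv.sum_comp σ fun i : Fin N => wt (((i : ℕ) : ZMod N) - (K i : ZMod N))]
      exact Finset.sum_congr rfl fun i _ => by rw [hσ i]
  · rw [if_neg fun h => hσ (matching_unique hK hle σ h.symm), mul_zero]
    obtain ⟨i, hi⟩ := not_forall.1 hσ
    exact Finset.prod_eq_zero (Finset.mem_univ i) (if_neg hi)

/-! ### Gabor systems -/

theorem exp_pow_val {N : ℕ} [NeZero N] (a : ZMod N) :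
    Complex.exp (2 * Real.pi * Complex.I / N) ^ a.val = ZMod.stdAddChar a := by
  rw [ZMod.stdAddChar_apply, ZMod.toCircle_apply, ← Complex.exp_nat_mul]
  congr 1
  ring

/-- For the vectors `φ = (x ^ wt j)_j`, the linear independence attached to one index set `Λ` fails
for at most finitely many `x`. -/
theorem exists_poly {N : ℕ} [NeZero N] (Λ : Finset (ZMod N × ZMod N)) (hΛ : Λ.card = N) :
    ∃ P : ℂ[X], P ≠ 0 ∧ ∀ x : ℂ, P.eval x ≠ 0 →
      LinearIndependent ℂ
        (fun p : {x // x ∈ Λ} => gabor N p.1.1 p.1.2 fun j => x ^ wt j) := by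
  classical
  let e : Fin N ≃ {x // x ∈ Λ} := (Λ.equivFinOfCardEq hΛ).symm
  obtain ⟨s, hs⟩ := exists_shift N fun j => (e j).1.1
  let K0 : Fin N → ℕ := fun j => ((e j).1.1 - s).val
  let q : Fin N ≃ {x // x ∈ Λ} := (Tuple.sort K0).trans e
  let K : Fin N → ℕ := fun j => ((q j).1.1 - s).val
  have hK : Monotone K := Tuple.monotone_sort K0
  have hle : ∀ j, K j ≤ j := by
    intro j
    by_contra! hj
    have h1 := hs (j + 1) j.isLt
    -- only columns before `j` can have `K ≤ j`, and there are fewer than `j + 1` of them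
    have h2 : (Finset.univ.filter fun i => ((e i).1.1 - s).val < (j : ℕ) + 1) ⊆
        (Finset.Iio j).map (Tuple.sort K0).toEmbedding := by
      intro i hi
      have hi' : K0 i < j + 1 := by simpa [K0] using hi
      rw [Finset.mem_map]
      refine ⟨(Tuple.sort K0).symm i, ?_, by simp⟩
      rw [Finset.mem_Iio]
      by_contra! h3
      have h4 := hK h3
      have h5 : K ((Tuple.sort K0).symm i) = K0 i := by simp [K, K0, q]
      omega
    have h3 := Finset.card_le_card h2
    rw [Finset.card_map, Fin.card_Iio] at h3
    omega
  have hcast : ∀ j, (K j : ZMod N) = (q j).1.1 - s := fun j => ZMod.natCast_zmod_val _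
  let z : Fin N → ℂ := fun j => ZMod.stdAddChar (q j).1.2
  let w : Fin N → ℂ := fun j => ZMod.stdAddChar (s * (q j).1.2)
  have hinj : ∀ i j, K i = K j → z i = z j → i = j := by
    intro i j h1 h2
    have h3 : (q i).1.1 = (q j).1.1 := by
      have := congrArg (Nat.cast : ℕ → ZMod N) h1
      rw [hcast, hcast] at this
      exact sub_left_injective this
    exact q.injective (Subtype.ext (Prod.ext h3 (ZMod.injective_stdAddChar h2)))
  refine ⟨_, det_poly_ne_zero (z := z) (w := w) hK hle (fun j => (AddChar.val_isUnit _ _).ne_zero)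
    (fun j => (AddChar.val_isUnit _ _).ne_zero) hinj, fun x hx => ?_⟩
  rw [← coe_evalRingHom, RingHom.map_det] at hx
  rw [← linearIndependent_equiv q]
  -- reading the coordinates in the order `s, s + 1, …` gives the columns of the evaluated matrix
  refine LinearIndependent.of_comp
    (LinearMap.funLeft ℂ ℂ fun i : Fin N => ((i : ℕ) : ZMod N) + s) ?_
  refine Eq.subst (motive := fun v => LinearIndependent ℂ v) ?_
    (Matrix.linearIndependent_cols_of_det_ne_zero hx)
  symm
  ext j i
  simp only [Function.comp_apply, LinearMap.funLeft_apply, gabor, exp_pow_val, Matrix.col_apply,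
    RingHom.mapMatrix_apply, Matrix.map_apply, Matrix.of_apply, coe_evalRingHom, eval_mul, eval_C,
    eval_pow, eval_X, hcast, z, w]
  rw [add_mul, AddChar.map_add_eq_mul, ← nsmul_eq_mul, AddChar.map_nsmul_eq_pow,
    mul_comm (ZMod.stdAddChar (s * _))]
  congr 3
  ring

/-- For every positive integer `N` there is a vector `φ ∈ ℂ^N` such that the Gabor system
`(φ, (ℤ/Nℤ)²)` is in general linear position. -/
theorem exists_gabor_frame_in_general_linear_position (N : ℕ) (hN : 0 < N) :
    ∃ φ : ZMod N → ℂ, InGeneralLinearPosition N φ := by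
  classical
  have : NeZero N := ⟨hN.ne'⟩
  choose P hP hPx using fun Λ : {Λ : Finset (ZMod N × ZMod N) // Λ.card = N} =>
    exists_poly Λ.1 Λ.2
  -- there are finitely many `Λ`, so one `x` avoids the roots of all their polynomials
  obtain ⟨x, hx⟩ : ∃ x, (∏ Λ, P Λ).eval x ≠ 0 :=
    exists_eval_ne_zero_of_natDegree_lt_card _ (Finset.prod_ne_zero_iff.2 fun Λ _ => hP Λ)
      ((Cardinal.natCast_lt_aleph0).trans_le (Cardinal.aleph0_le_mk ℂ))
  rw [eval_prod, Finset.prod_ne_zero_iff] at hx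
  refine ⟨fun j => x ^ wt j, fun Λ hΛ => ?_⟩
  have hli := hPx ⟨Λ, hΛ⟩ x (hx _ (Finset.mem_univ _))
  exact ⟨hli, hli.span_eq_top_of_card_eq_finrank' (by simp [hΛ])⟩
end

section
/- Let N be a positive integer and Λ ⊆ (ℤ/Nℤ)² with |Λ| = N. For 0 ≤ κ ≤ N−1 let l_κ = #{λ : (κ,λ) ∈ Λ} and m_κ = l_0 + l_1 + ⋯ + l_{κ−1} (with m_0 = 0). Assume m_κ ≥ κ for all 0 ≤ κ ≤ N−1. Then the coefficient in P_Λ = det(D_Λ) of the consecutive index monomial Z = ∏_{κ=0}^{N−1} ∏_{n=m_κ}^{m_{κ+1}−1} z_{n−κ} is nonzero. -/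
/-!
Expanding the determinant over permutations `σ`, the term of `σ` is a scalar times
`∏_c z_{σ(c) - κ_c}`. Let `k` be the block function: `k(n) = κ` iff `m_κ ≤ n < m_{κ+1}`.
The point is that the term of `σ` is a multiple of `Z` only if `κ_c = k(σ(c))` for every column
`c`. Write `κ'` for the assignment of the `κ`'s to the rows given by `σ`; it takes each value as
often as `k` does. Equality of monomials says that `j - κ'_j` and `j - k_j` (mod `N`) have the
same distribution.

* Comparing the sums of the indices shows that no `j - κ'_j` wraps around modulo `N`, since
  none of the `j - k_j` does (this is where `m_κ ≥ κ` enters).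
* Comparing the sums of their squares then gives `∑ j κ'_j = ∑ j k_j`, so `κ'` is an optimal
  rearrangement. The potential `q ↦ ∑_{t<q} (2j + 1 - 2m_{t+1})` has its unique maximum at
  `q = k_j`, which forces `κ' = k` (`potential_lt`, `assignment_unique`).

Hence the coefficient of `Z` is the determinant of the block matrix with entries `ω^{jλ}` where
`k_j = κ` and `0` elsewhere. Each block consists of consecutive powers of distinct `N`-th roots of
unity, so it is a Vandermonde matrix with rescaled columns, and the determinant is nonzero
(`det_block_ne_zero`).
-/

open MvPolynomial

/-- The matrix `D_Λ` over `ℂ[z_0,…,z_{N-1}]`: rows indexed by `j ∈ ℤ/Nℤ`, columns indexed by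
the elements of `Λ` (enumerated by an equivalence `e : ℤ/Nℤ ≃ Λ`), with `(j,(κ,λ))` entry
`ω^{jλ} z_{j-κ}`, where `ω = e^{2πi/N}`. -/
noncomputable def Dmat (N : ℕ) (Λ : Finset (ZMod N × ZMod N)) (e : ZMod N ≃ {p // p ∈ Λ}) :
    Matrix (ZMod N) (ZMod N) (MvPolynomial (ZMod N) ℂ) :=
  fun j c =>
    C (Complex.exp (2 * Real.pi * Complex.I / N) ^ (j * (e c).1.2).val) * X (j - (e c).1.1)

/-! ### Sums over residues and over blocks -/

lemma sum_zmod_val {N : ℕ} [NeZero N] {A : Type*} [AddCommMonoid A] (f : ℕ → A) :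
    ∑ a : ZMod N, f a.val = ∑ i ∈ Finset.range N, f i := by
  refine Finset.sum_bij' (fun a _ => a.val) (fun i _ => (i : ZMod N)) ?_ ?_ ?_ ?_ ?_
  · intro a _; simpa using ZMod.val_lt a
  · simp
  · simp
  · intro i hi; exact ZMod.val_cast_of_lt (by simpa using hi)
  · simp

/-- The function `k` reads off the block `[m κ, m (κ + 1))` containing a given number. -/
lemma sum_blocks {A : Type*} [AddCommMonoid A] {m k : ℕ → ℕ} (hmono : Monotone m)
    (h0 : m 0 = 0) (f : ℕ → ℕ → A) (K : ℕ)
    (hk : ∀ κ < K, ∀ n, m κ ≤ n → n < m (κ + 1) → k n = κ) :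
    ∑ κ ∈ Finset.range K, ∑ n ∈ Finset.Ico (m κ) (m (κ + 1)), f κ n
      = ∑ n ∈ Finset.range (m K), f (k n) n := by
  induction K with
  | zero => simp [h0]
  | succ K ih =>
    rw [Finset.sum_range_succ, ih fun κ h => hk κ (by omega), Finset.range_eq_Ico, Finset.range_eq_Ico,
      ← Finset.sum_Ico_consecutive (fun n => f (k n) n) (Nat.zero_le _) (hmono (Nat.le_succ K))]
    congr 1
    refine Finset.sum_congr rfl fun n hn => ?_
    rw [Finset.mem_Ico] at hn
    rw [hk K (Nat.lt_succ_self K) n hn.1 hn.2]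

/-! ### Uniqueness of the row assignment -/

/-- The potential `q ↦ ∑_{t<q} (2n + 1 - 2m_{t+1})` is maximal exactly at the index of the block
containing `n`: its increments are positive before that index and negative after it, the odd
constant excluding zero increments. -/
lemma potential_lt {m : ℕ → ℕ} (hmono : Monotone m) {n k q : ℕ} (h1 : m k ≤ n)
    (h2 : n < m (k + 1)) (hq : q ≠ k) :
    ∑ t ∈ Finset.range q, (2 * (n : ℤ) + 1 - 2 * m (t + 1))
      < ∑ t ∈ Finset.range k, (2 * (n : ℤ) + 1 - 2 * m (t + 1)) := by
  rcases lt_or_gt_of_ne hq with h | h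
  · rw [← sub_pos, ← Finset.sum_Ico_eq_sub _ h.le]
    refine Finset.sum_pos (fun t ht => ?_) (by simpa using h)
    rw [Finset.mem_Ico] at ht
    have : m (t + 1) ≤ m k := hmono (by omega)
    omega
  · rw [← sub_pos, ← neg_sub, ← Finset.sum_Ico_eq_sub _ h.le, ← Finset.sum_neg_distrib]
    refine Finset.sum_pos (fun t ht => ?_) (by simpa using h)
    rw [Finset.mem_Ico] at ht
    have : m (k + 1) ≤ m (t + 1) := hmono (by omega)
    omega

/-- A rearrangement `q` of the block function `k` for which the indices `j - q j` modulo `N` have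
the same distribution as the `j - k j` coincides with `k`. -/
lemma assignment_unique {N : ℕ} [NeZero N] {m k : ℕ → ℕ} (hmono : Monotone m)
    (hk1 : ∀ n < N, m (k n) ≤ n) (hk2 : ∀ n < N, n < m (k n + 1)) (hkle : ∀ n < N, k n ≤ n)
    (q : ZMod N → ZMod N)
    (hdist : ∀ h : ℕ → ℤ, ∑ j, h (q j).val = ∑ j : ZMod N, h (k j.val))
    (hidx : ∀ g : ZMod N → ℤ,
      ∑ j, g (j - q j) = ∑ j : ZMod N, g ((j.val - k j.val : ℕ) : ZMod N))
    (j : ZMod N) : (q j).val = k j.val := by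
  have hNpos : 0 < N := Nat.pos_of_neZero N
  have hval : ∀ j : ZMod N, ((((j.val - k j.val : ℕ) : ZMod N).val : ℕ) : ℤ)
      = (j.val : ℤ) - k j.val := by
    intro j
    have hj := ZMod.val_lt j
    rw [ZMod.val_cast_of_lt (by omega), Nat.cast_sub (hkle _ hj)]
  have hwrap : ∀ j : ZMod N, ((j - q j).val : ℤ)
      = (j.val : ℤ) - (q j).val + if (q j).val ≤ j.val then 0 else (N : ℤ) := by
    intro j
    split_ifs with h
    · rw [ZMod.val_sub h, Nat.cast_sub h]; ring
    · have hlt := ZMod.val_lt (q j)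
      have h3 : (j - q j) = ((j.val + N - (q j).val : ℕ) : ZMod N) := by
        rw [Nat.cast_sub (by omega)]; simp
      rw [h3, ZMod.val_cast_of_lt (by omega), Nat.cast_sub (by omega)]
      push_cast; ring
  have e1 := hidx fun a => (a.val : ℤ)
  have e2 := hdist fun a => (a : ℤ)
  simp only [hval, hwrap, Finset.sum_add_distrib, Finset.sum_sub_distrib] at e1
  -- Equal index sums leave no room for the nonnegative wrap-around terms.
  have e3 : ∑ j : ZMod N, (if (q j).val ≤ j.val then (0 : ℤ) else (N : ℤ)) = 0 := by
    linarith
  have hnowrap : ∀ j : ZMod N, (q j).val ≤ j.val := by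
    intro j
    rw [Finset.sum_eq_zero_iff_of_nonneg (fun j _ => by split_ifs <;> simp)] at e3
    have := e3 j (Finset.mem_univ _)
    by_contra hc
    rw [if_neg hc] at this
    omega
  have hval2 : ∀ j : ZMod N, ((j - q j).val : ℤ) = (j.val : ℤ) - (q j).val := by
    intro j; rw [hwrap, if_pos (hnowrap j), add_zero]
  have e4 := hidx fun a => (a.val : ℤ) ^ 2
  simp only [hval, hval2, sub_sq, Finset.sum_add_distrib, Finset.sum_sub_distrib] at e4
  have e5 := hdist fun a => (a : ℤ) ^ 2
  have e6 := hdist fun a => ∑ t ∈ Finset.range a, (1 - 2 * (m (t + 1) : ℤ))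
  -- The potential sum is `2 ∑ j q_j` plus terms depending only on the distribution of `q`.
  have hpot : ∀ (n : ℤ) (a : ℕ), ∑ t ∈ Finset.range a, (2 * n + 1 - 2 * (m (t + 1) : ℤ))
      = 2 * n * a + ∑ t ∈ Finset.range a, (1 - 2 * (m (t + 1) : ℤ)) := by
    intro n a
    simp only [add_sub_assoc, Finset.sum_add_distrib, Finset.sum_const, Finset.card_range,
      nsmul_eq_mul]
    ring
  have hle : ∀ j ∈ (Finset.univ : Finset (ZMod N)),
      ∑ t ∈ Finset.range (q j).val, (2 * (j.val : ℤ) + 1 - 2 * m (t + 1))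
      ≤ ∑ t ∈ Finset.range (k j.val), (2 * (j.val : ℤ) + 1 - 2 * m (t + 1)) := by
    intro j _
    have hj := ZMod.val_lt j
    rcases eq_or_ne (q j).val (k j.val) with h | h
    · rw [h]
    · exact (potential_lt hmono (hk1 _ hj) (hk2 _ hj) h).le
  have hsum : ∑ j : ZMod N, ∑ t ∈ Finset.range (q j).val, (2 * (j.val : ℤ) + 1 - 2 * m (t + 1))
      = ∑ j : ZMod N, ∑ t ∈ Finset.range (k j.val), (2 * (j.val : ℤ) + 1 - 2 * m (t + 1)) := by
    simp only [hpot, Finset.sum_add_distrib]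
    linarith
  have heq := (Finset.sum_eq_sum_iff_of_le hle).1 hsum j (Finset.mem_univ _)
  by_contra hne
  have hj := ZMod.val_lt j
  exact (potential_lt hmono (hk1 _ hj) (hk2 _ hj) hne).ne heq

/-! ### Nonvanishing of the block Vandermonde determinant -/

/-- The coefficient matrix of the consecutive index monomial: its blocks are Vandermonde matrices
in distinct powers of `ω`, up to column scaling. -/
lemma det_block_ne_zero_s3 {N : ℕ} [NeZero N] {m k : ℕ → ℕ}
    (hk : ∀ κ < N, ∀ n, m κ ≤ n → n < m (κ + 1) → k n = κ)
    (hmN : ∀ κ < N, m (κ + 1) ≤ N) {w : ℂ} (hw : IsPrimitiveRoot w N)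
    (p : ZMod N → ZMod N × ZMod N) (hp : Function.Injective p)
    (hcard : ∀ κ < N, m (κ + 1) = m κ + (Finset.univ.filter fun c => (p c).1.val = κ).card) :
    (Matrix.of fun j c : ZMod N =>
      if (p c).1.val = k j.val then w ^ (j * (p c).2).val else 0).det ≠ 0 := by
  intro hdet
  obtain ⟨v, hv0, hv⟩ := Matrix.exists_mulVec_eq_zero_iff.2 hdet
  refine hv0 (funext fun c₀ => ?_)
  set κ := (p c₀).1.val with hκ
  have hκN : κ < N := ZMod.val_lt _
  set S := Finset.univ.filter fun c => (p c).1.val = κ with hS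
  have hwpow : ∀ j a : ZMod N, w ^ (j * a).val = (w ^ a.val) ^ j.val := by
    intro j a
    rw [ZMod.val_mul, ← pow_mul, mul_comm a.val, ← pow_mod_orderOf w (j.val * a.val),
      ← hw.eq_orderOf]
  let E := S.equivFin.symm
  have hinj : Function.Injective fun i => w ^ (p (E i).1).2.val := by
    intro i i' h
    have h2 := hw.pow_inj (ZMod.val_lt _) (ZMod.val_lt _) h
    have hi := (Finset.mem_filter.1 (E i).2).2
    have hi' := (Finset.mem_filter.1 (E i').2).2
    apply E.injective
    apply Subtype.ext
    apply hp
    exact Prod.ext (ZMod.val_injective N (hi.trans hi'.symm)) (ZMod.val_injective N h2)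
  -- The row `m κ + i` of the system reads `∑ v_c (ω^λ)^(m κ) (ω^λ)^i = 0`.
  have key := Matrix.eq_zero_of_forall_pow_sum_mul_pow_eq_zero
    (v := fun i => v (E i).1 * (w ^ (p (E i).1).2.val) ^ m κ) hinj (by
    intro i
    have hi := i.2
    have hlt : m κ + i.1 < m (κ + 1) := by rw [hcard κ hκN, ← hS]; omega
    have hjv : ((m κ + i.1 : ℕ) : ZMod N).val = m κ + i.1 :=
      ZMod.val_cast_of_lt (hlt.trans_le (hmN κ hκN))
    have hrow := congrFun hv ((m κ + i.1 : ℕ) : ZMod N)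
    simp only [Matrix.mulVec, dotProduct, Matrix.of_apply, hwpow, hjv,
      hk κ hκN _ (Nat.le_add_right _ _) hlt, Pi.zero_apply, ite_mul, zero_mul] at hrow
    rw [← Finset.sum_filter, ← hS, ← Finset.sum_coe_sort, ← E.sum_comp] at hrow
    rw [← hrow]
    refine Finset.sum_congr rfl fun x _ => ?_
    rw [pow_add]; ring)
  have hc : c₀ ∈ S := by simp [hS, hκ]
  have := congrFun key (E.symm ⟨c₀, hc⟩)
  simp only [Equiv.apply_symm_apply, Pi.zero_apply] at this
  exact (mul_eq_zero.1 this).resolve_right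
    (pow_ne_zero _ (pow_ne_zero _ (hw.ne_zero (NeZero.ne N))))

/-! ### The coefficient of the consecutive index monomial -/

/-- If `m_κ ≥ κ` for all `0 ≤ κ ≤ N-1` (where `l_κ = #{λ : (κ,λ) ∈ Λ}` and
`m_κ = l_0 + ⋯ + l_{κ-1}`), then the coefficient in `det(D_Λ)` of the consecutive index
monomial `Z = ∏_{κ=0}^{N-1} ∏_{n=m_κ}^{m_{κ+1}-1} z_{n-κ}` is nonzero. -/
theorem coeff_CI_monomial_ne_zero (N : ℕ) [NeZero N] (Λ : Finset (ZMod N × ZMod N))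
    (hΛ : Λ.card = N) (e : ZMod N ≃ {p // p ∈ Λ})
    (l : ℕ → ℕ) (hl : ∀ κ, l κ = (Λ.filter fun p => p.1 = (κ : ZMod N)).card)
    (m : ℕ → ℕ) (hm : ∀ κ, m κ = ∑ i ∈ Finset.range κ, l i)
    (hnorm : ∀ κ < N, κ ≤ m κ) :
    MvPolynomial.coeff
      (∑ κ ∈ Finset.range N, ∑ n ∈ Finset.Ico (m κ) (m (κ + 1)),
        Finsupp.single ((↑(n - κ) : ZMod N)) 1)
      (Dmat N Λ e).det ≠ 0 := by
  have hsucc : ∀ κ, m (κ + 1) = m κ + l κ := fun κ => by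
    rw [hm, hm, Finset.sum_range_succ]
  have hmono : Monotone m := monotone_nat_of_le_succ fun κ => by rw [hsucc]; omega
  have h0 : m 0 = 0 := by simp [hm]
  have hl' : ∀ κ < N, l κ = (Λ.filter fun p => p.1.val = κ).card := by
    intro κ hκ
    rw [hl]
    congr 1
    refine Finset.filter_congr fun p _ => ?_
    constructor
    · intro h; rw [h, ZMod.val_cast_of_lt hκ]
    · intro h; rw [← h, ZMod.natCast_zmod_val]
  have hΛsum : ∀ h : ℕ → ℤ, ∑ p ∈ Λ, h p.1.val = ∑ κ ∈ Finset.range N, l κ * h κ := by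
    intro h
    rw [← Finset.sum_fiberwise_of_maps_to (s := Λ) (t := Finset.range N) (g := fun p => p.1.val)
      (fun p _ => Finset.mem_range.2 (ZMod.val_lt _))]
    refine Finset.sum_congr rfl fun κ hκ => ?_
    rw [hl' κ (Finset.mem_range.1 hκ), ← nsmul_eq_mul]
    refine Finset.sum_eq_card_nsmul fun p hp => ?_
    rw [(Finset.mem_filter.1 hp).2]
  have hmN : m N = N := by
    have := hΛsum fun _ => 1
    simp only [Finset.sum_const, hΛ, mul_one, nsmul_eq_mul] at this
    rw [hm]
    exact_mod_cast this.symm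
  have hex : ∀ n, ∃ κ, n < N → m κ ≤ n ∧ n < m (κ + 1) := by
    intro n
    by_cases hn : n < N
    · have hP : ∃ κ, n < m (κ + 1) :=
        ⟨N, by have := hmono (Nat.le_succ N); rw [Nat.succ_eq_add_one] at this; omega⟩
      refine ⟨Nat.find hP, fun _ => ⟨?_, Nat.find_spec hP⟩⟩
      rcases h : Nat.find hP with _ | t
      · omega
      · exact not_lt.1 (Nat.find_min hP (m := t) (by omega))
    · exact ⟨0, fun h => absurd h hn⟩
  choose k hkspec using hex
  have hmle : ∀ κ < N, m (κ + 1) ≤ N := fun κ hκ => (hmono (by omega : κ + 1 ≤ N)).trans hmN.le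
  have hkN : ∀ n < N, k n < N := by
    intro n hn
    by_contra hc
    have := hmono (not_lt.1 hc)
    have := (hkspec n hn).1
    omega
  have hk : ∀ κ < N, ∀ n, m κ ≤ n → n < m (κ + 1) → k n = κ := by
    intro κ hκ n h1 h2
    obtain ⟨h3, h4⟩ := hkspec n (h2.trans_le (hmle κ hκ))
    by_contra hne
    rcases lt_or_gt_of_ne hne with h | h
    · have := hmono (by omega : k n + 1 ≤ κ)
      omega
    · have := hmono (by omega : κ + 1 ≤ k n)
      omega
  have hkle : ∀ n < N, k n ≤ n := fun n hn => (hnorm _ (hkN n hn)).trans (hkspec n hn).1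
  have hΛdist : ∀ h : ℕ → ℤ, ∑ c, h (e c).1.1.val = ∑ j : ZMod N, h (k j.val) := by
    intro h
    rw [sum_zmod_val fun j => h (k j), e.sum_comp fun p => h p.1.1.val,
      Finset.sum_coe_sort Λ fun p => h p.1.val, hΛsum]
    have := sum_blocks hmono h0 (fun κ _ => h κ) N hk
    rw [hmN] at this
    rw [← this]
    refine Finset.sum_congr rfl fun κ _ => ?_
    simp [hsucc]
  have hd : (∑ κ ∈ Finset.range N, ∑ n ∈ Finset.Ico (m κ) (m (κ + 1)),
        Finsupp.single ((↑(n - κ) : ZMod N)) 1)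
      = ∑ j : ZMod N, Finsupp.single (((j.val - k j.val : ℕ) : ZMod N)) 1 := by
    rw [sum_blocks hmono h0 (fun κ n => Finsupp.single ((↑(n - κ) : ZMod N)) 1) N hk, hmN,
      sum_zmod_val fun j => Finsupp.single (((j - k j : ℕ) : ZMod N)) 1]
  set w := Complex.exp (2 * Real.pi * Complex.I / N) with hw
  have hprim : IsPrimitiveRoot w N := by
    simpa [hw] using Complex.isPrimitiveRoot_exp N (NeZero.ne N)
  -- A permutation contributes to the coefficient iff it respects the blocks.
  have hexp : ∀ σ : Equiv.Perm (ZMod N),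
      (∑ c, Finsupp.single (σ c - (e c).1.1) 1
        = ∑ j : ZMod N, Finsupp.single (((j.val - k j.val : ℕ) : ZMod N)) 1)
      ↔ ∀ c, (e c).1.1.val = k (σ c).val := by
    intro σ
    constructor
    · intro h c
      have := assignment_unique hmono (fun n hn => (hkspec n hn).1) (fun n hn => (hkspec n hn).2)
        hkle (fun j => (e (σ.symm j)).1.1) (fun h => by
          rw [← hΛdist h]
          exact σ.symm.sum_comp fun c => h (e c).1.1.val) (fun g => by
          have h2 := congrArg (Finsupp.linearCombination ℕ g) h
          simp only [map_sum, Finsupp.linearCombination_single, one_smul] at h2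
          rw [← h2, ← Equiv.sum_comp σ]
          simp) (σ c)
      simpa using this
    · intro h
      rw [← Equiv.sum_comp σ fun j : ZMod N =>
        Finsupp.single (((j.val - k j.val : ℕ) : ZMod N)) 1]
      refine Finset.sum_congr rfl fun c _ => ?_
      congr 1
      rw [Nat.cast_sub (hkle _ (ZMod.val_lt _)), ← h c]
      simp
  have hdet := det_block_ne_zero_s3 hk hmle hprim (fun c => (e c).1)
    (Subtype.val_injective.comp e.injective) (by
      intro κ hκ
      rw [hsucc, hl' κ hκ]
      congr 1
      refine (Finset.card_bij (fun c _ => (e c).1) ?_ ?_ ?_).symm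
      · intro c hc
        simpa using hc
      · intro c _ c' _ h
        exact e.injective (Subtype.ext h)
      · intro p hp
        rw [Finset.mem_filter] at hp
        exact ⟨e.symm ⟨p, hp.1⟩, by simp [hp.2], by simp⟩)
  rw [hd]
  convert hdet using 1
  rw [Matrix.det_apply', Matrix.det_apply', MvPolynomial.coeff_sum]
  refine Finset.sum_congr rfl fun σ _ => ?_
  have hprod : ∏ c, Dmat N Λ e (σ c) c
      = monomial (∑ c, Finsupp.single (σ c - (e c).1.1) 1)
          (∏ c, w ^ (σ c * (e c).1.2).val) := by
    rw [MvPolynomial.monomial_sum_prod]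
    exact Finset.prod_congr rfl fun c _ => C_mul_X_eq_monomial
  have hsign : ((Equiv.Perm.sign σ : ℤ) : MvPolynomial (ZMod N) ℂ)
      = C ((Equiv.Perm.sign σ : ℤ) : ℂ) := by simp
  rw [hprod, hsign, MvPolynomial.coeff_C_mul, MvPolynomial.coeff_monomial]
  congr 1
  simp only [Matrix.of_apply, hexp σ]
  rw [Finset.prod_ite_zero]
  simp
end

section
/- Let N be a positive integer, Λ ⊆ (ℤ/Nℤ)² with |Λ| = N, and v ∈ (ℤ/Nℤ)². Let Λ' = Λ − v be the translate of Λ by −v. Then there exists a nonzero complex constant c such that det(D_{Λ'}) = c · det(D_Λ) as polynomials in ℂ[z_0,…,z_{N−1}]; in particular, det(D_{Λ'}) is the zero polynomial if and only if det(D_Λ) is. -/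
/-!
Write `v = (a, b)` and `χ x = ω ^ x`, a nowhere vanishing additive character of `ℤ/Nℤ`. The column of
`D_{Λ'}` at `(κ - a, l - b)`, where `(κ, l) ∈ Λ`, has entries `χ (j (l - b)) z_{(j + a) - κ}`, and
`j (l - b) = (j + a) l - j b - a l`. So `D_{Λ'}` arises from `D_Λ` by the row permutation
`j ↦ j + a`, a permutation of the columns, multiplication of row `j` by `χ (-j b)` and
multiplication of columns by `χ (-a l)`. Each operation multiplies the determinant by a nonzero
constant.
-/

open MvPolynomial

/-- The character `x ↦ ω ^ x` of `ℤ/Nℤ` with `ω = e^{2πi/N}`, evaluated through the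
representative of `x` in `{0, …, N - 1}`. -/
noncomputable def omegaPow (N : ℕ) (x : ZMod N) : ℂ :=
  Complex.exp (2 * Real.pi * Complex.I / N) ^ x.val

theorem omegaPow_add (N : ℕ) [NeZero N] (x y : ZMod N) :
    omegaPow N (x + y) = omegaPow N x * omegaPow N y := by
  have h : Complex.exp (2 * Real.pi * Complex.I / N) ^ N = 1 :=
    (Complex.isPrimitiveRoot_exp N (NeZero.ne N)).pow_eq_one
  rw [omegaPow, omegaPow, omegaPow, ZMod.val_add, ← pow_add, ← pow_eq_pow_mod _ h]

theorem omegaPow_ne_zero (N : ℕ) (x : ZMod N) : omegaPow N x ≠ 0 :=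
  pow_ne_zero _ (Complex.exp_ne_zero _)

/-- If `Λ' = Λ - v` is a translate of `Λ ⊆ (ℤ/Nℤ)²`, `|Λ| = N`, then `det(D_{Λ'}) = c ⬝ det(D_Λ)`
for some nonzero constant `c ∈ ℂ` (for any orderings of the columns of the two matrices);
in particular one determinant vanishes identically iff the other does. -/
theorem det_translate_eq_const_mul (N : ℕ) [NeZero N] (Λ Λ' : Finset (ZMod N × ZMod N))
    (hΛ : Λ.card = N) (v : ZMod N × ZMod N)
    (hΛ' : Λ' = Λ.image fun p => p - v)
    (e : ZMod N ≃ {p // p ∈ Λ}) (e' : ZMod N ≃ {p // p ∈ Λ'}) :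
    ∃ c : ℂ, c ≠ 0 ∧ (Dmat N Λ' e').det = C c * (Dmat N Λ e).det := by
  classical
  have hmem : ∀ c, (e' c).1 + v ∈ Λ := by
    intro c
    have hsub : ∀ q ∈ Λ', q ∈ Λ.image fun p => p - v := fun q hq => hΛ' ▸ hq
    obtain ⟨p, hp, hpe⟩ := Finset.mem_image.mp (hsub _ (e' c).2)
    rw [← hpe, sub_add_cancel]
    exact hp
  have hinj : Function.Injective fun c => e.symm ⟨(e' c).1 + v, hmem c⟩ := by
    intro c d h
    have h1 := congrArg Subtype.val (e.symm.injective h)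
    exact e'.injective (Subtype.ext (add_right_cancel h1))
  -- `σ` matches each column of `D_{Λ'}` with the column of `D_Λ` it is the translate of.
  let σ : Equiv.Perm (ZMod N) := Equiv.ofBijective _ (Finite.injective_iff_bijective.mp hinj)
  have hσ : ∀ c, (e (σ c)).1 = (e' c).1 + v := by
    intro c
    simp [σ]
  let τ : Equiv.Perm (ZMod N) := Equiv.addRight v.1
  let r : ZMod N → ℂ := fun j => omegaPow N (-(j * v.2))
  let s : ZMod N → ℂ := fun c => omegaPow N (-(v.1 * (e (σ c)).1.2))
  have hD : Dmat N Λ' e' = Matrix.of fun j c => C (r j) *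
      (Matrix.of fun j c => C (s c) * (((Dmat N Λ e).submatrix τ id).submatrix id σ) j c) j c := by
    ext1 j c
    have hX : j - (e' c).1.1 = j + v.1 - (e (σ c)).1.1 := by
      rw [hσ, Prod.fst_add]; ring
    have hχ : omegaPow N (j * (e' c).1.2) =
        r j * (s c * omegaPow N ((j + v.1) * (e (σ c)).1.2)) := by
      simp only [r, s]
      rw [← omegaPow_add, ← omegaPow_add, hσ, Prod.snd_add]
      congr 1
      ring
    change C (omegaPow N (j * (e' c).1.2)) * X (j - (e' c).1.1) =
      C (r j) * (C (s c) * (C (omegaPow N ((j + v.1) * (e (σ c)).1.2)) *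
        X (j + v.1 - (e (σ c)).1.1)))
    rw [hX, hχ, C_mul, C_mul]
    ring
  refine ⟨(∏ j, r j) * ((∏ c, s c) * (((σ.sign : ℤ) : ℂ) * ((τ.sign : ℤ) : ℂ))), ?_, ?_⟩
  · refine mul_ne_zero (Finset.prod_ne_zero_iff.mpr fun _ _ => omegaPow_ne_zero N _)
      (mul_ne_zero (Finset.prod_ne_zero_iff.mpr fun _ _ => omegaPow_ne_zero N _)
        (mul_ne_zero ?_ ?_)) <;> exact Int.cast_ne_zero.mpr (Units.ne_zero _)
  · rw [hD, Matrix.det_mul_column, Matrix.det_mul_row, Matrix.det_permute', Matrix.det_permute]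
    simp only [map_mul, map_prod, map_intCast]
    ring
end

section
/- Let N be a positive integer and let b : {0,…,N−1} → {0,…,N−1} be a nondecreasing function with b(n) ≤ n for all n. Then for every permutation σ of {0,…,N−1}, ∑_{n=0}^{N−1} ((σ(n) − b(n)) mod N) ≥ ∑_{n=0}^{N−1} (n − b(n)), where (x mod N) denotes the representative of x in {0,…,N−1}. -/
/-!
Every integer `x < N` satisfies `x ≤ x mod N`: equality holds for `x ≥ 0`, while for `x < 0` the
residue is nonnegative. Applying this to `x = σ(n) - b(n) ≤ σ(n) < N` and summing bounds the
left-hand side below by `∑ (σ(n) - b(n))`, which equals `∑ (n - b(n))` because `σ` only reorders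
the summands `n`.
-/

/-- Let `b : {0,…,N-1} → {0,…,N-1}` be nondecreasing with `b(n) ≤ n` for all `n`. Then for
every permutation `σ` of `{0,…,N-1}`,
`∑_n ((σ(n) - b(n)) mod N) ≥ ∑_n (n - b(n))`,
where `(x mod N)` is the representative of `x` in `{0,…,N-1}`. -/
theorem sum_mod_sub_ge (N : ℕ) (hN : 0 < N) (b : Fin N → Fin N)
    (hmono : Monotone b) (hle : ∀ n : Fin N, (b n : ℕ) ≤ (n : ℕ))
    (σ : Equiv.Perm (Fin N)) :
    ∑ n : Fin N, (((σ n : ℕ) : ℤ) - ((b n : ℕ) : ℤ)) % (N : ℤ) ≥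
      ∑ n : Fin N, (((n : ℕ) : ℤ) - ((b n : ℕ) : ℤ)) := by
  calc
    ∑ n : Fin N, (((n : ℕ) : ℤ) - ((b n : ℕ) : ℤ))
        = ∑ n : Fin N, (((σ n : ℕ) : ℤ) - ((b n : ℕ) : ℤ)) := by
      rw [Finset.sum_sub_distrib, Finset.sum_sub_distrib,
        Equiv.sum_comp σ (fun n : Fin N => ((n : ℕ) : ℤ))]
    _ ≤ ∑ n : Fin N, (((σ n : ℕ) : ℤ) - ((b n : ℕ) : ℤ)) % (N : ℤ) := by
      refine Finset.sum_le_sum fun n _ => ?_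
      have hσ := (σ n).isLt
      rcases le_or_gt 0 (((σ n : ℕ) : ℤ) - ((b n : ℕ) : ℤ)) with h | h
      · exact (Int.emod_eq_of_lt h (by omega)).ge
      · exact h.le.trans (Int.emod_nonneg _ (by omega))
end

section
/- Let N be a positive integer and let b : {0,…,N−1} → {0,…,N−1} be a nondecreasing function with b(n) ≤ n for all n. Then for every permutation σ of {0,…,N−1}, ∑_{n=0}^{N−1} ((σ(n) − b(n)) mod N)² ≥ ∑_{n=0}^{N−1} (n − b(n))², with equality if and only if b(σ(n)) = b(n) for every n (i.e., σ leaves each level set of b invariant). -/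
/-!
Lift the residues to the line: put `y n = b n + ((σ n - b n) mod N)`, so that `y n ≡ σ n (mod N)`
and `0 ≤ b n ≤ y n`; the values `y n` are pairwise distinct natural numbers. Let `τ` sort `y`.
Since `b` is nondecreasing, the rearrangement inequality gives
`∑ (y n - b n)² ≥ ∑ (y (τ n) - b n)²`. A strictly increasing sequence of naturals satisfies
`y (τ n) ≥ n`, and `n ≥ b n`, so the right-hand side is at least `∑ (n - b n)²`.

In the case of equality, `y (τ n) = n`, which forces `τ = σ⁻¹`, and the equality case of the
rearrangement inequality says that `b ∘ τ` is again monotone. Two monotone rearrangements of the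
same tuple coincide, so `b ∘ σ⁻¹ = b`.
-/

/-- Expanding the squares: permuting `y` changes `∑ (y n - b n)²` only through the cross term. -/
theorem sum_sub_sq_eq_comp_perm {ι : Type*} [Fintype ι] (y b : ι → ℤ) (τ : Equiv.Perm ι) :
    ∑ n, (y n - b n) ^ 2 =
      ∑ n, (y (τ n) - b n) ^ 2 + 2 * (∑ n, y (τ n) * b n - ∑ n, y n * b n) := by
  have h : ∑ n, y (τ n) ^ 2 = ∑ n, y n ^ 2 := Equiv.sum_comp τ (fun n => y n ^ 2)
  simp only [sub_sq, Finset.sum_add_distrib, Finset.sum_sub_distrib, h, mul_assoc,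
    ← Finset.mul_sum]
  ring

theorem le_of_strictMono_fin_int {N : ℕ} (z : Fin N → ℤ) (hz : StrictMono z)
    (h0 : ∀ n, 0 ≤ z n) (n : Fin N) : ((n : ℕ) : ℤ) ≤ z n := by
  obtain ⟨k, hk⟩ := n
  induction k with
  | zero => exact h0 _
  | succ k ih =>
    have h1 := ih (by omega)
    have h2 : z ⟨k, by omega⟩ < z ⟨k + 1, hk⟩ := hz (by simp [Fin.lt_def])
    push_cast at h1 ⊢
    omega

/-- Let `b : {0,…,N-1} → {0,…,N-1}` be nondecreasing with `b(n) ≤ n` for all `n`. Then for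
every permutation `σ` of `{0,…,N-1}`,
`∑_n ((σ(n) - b(n)) mod N)² ≥ ∑_n (n - b(n))²`,
with equality if and only if `b(σ(n)) = b(n)` for every `n`. Here `(x mod N)` is the
representative of `x` in `{0,…,N-1}`. -/
theorem sum_sq_mod_sub_ge_iff (N : ℕ) (hN : 0 < N) (b : Fin N → Fin N)
    (hmono : Monotone b) (hle : ∀ n : Fin N, (b n : ℕ) ≤ (n : ℕ))
    (σ : Equiv.Perm (Fin N)) :
    (∑ n : Fin N, ((((σ n : ℕ) : ℤ) - ((b n : ℕ) : ℤ)) % (N : ℤ)) ^ 2 ≥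
      ∑ n : Fin N, (((n : ℕ) : ℤ) - ((b n : ℕ) : ℤ)) ^ 2) ∧
    ((∑ n : Fin N, ((((σ n : ℕ) : ℤ) - ((b n : ℕ) : ℤ)) % (N : ℤ)) ^ 2 =
        ∑ n : Fin N, (((n : ℕ) : ℤ) - ((b n : ℕ) : ℤ)) ^ 2) ↔
      ∀ n : Fin N, b (σ n) = b n) := by
  set B : Fin N → ℤ := fun n => ((b n : ℕ) : ℤ) with hB
  have hBmono : Monotone B := fun i j h => by
    have : (b i : ℕ) ≤ (b j : ℕ) := hmono h
    simp only [hB]; exact_mod_cast this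
  have hN' : (0 : ℤ) < N := by exact_mod_cast hN
  set y : Fin N → ℤ := fun n => B n + (((σ n : ℕ) : ℤ) - B n) % (N : ℤ) with hy
  have hy0 : ∀ n, 0 ≤ y n := fun n =>
    add_nonneg (Int.natCast_nonneg _) (Int.emod_nonneg _ hN'.ne')
  have hymod : ∀ n, y n % (N : ℤ) = ((σ n : ℕ) : ℤ) := fun n => by
    have h : y n % (N : ℤ) = ((σ n : ℕ) : ℤ) % N := by
      simp only [hy, Int.add_emod_emod, add_sub_cancel]
    rw [h, Int.emod_eq_of_lt (Int.natCast_nonneg _) (by exact_mod_cast (σ n).isLt)]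
  have hyinj : Function.Injective y := fun i j h => by
    have h1 := hymod i
    rw [h, hymod j] at h1
    exact σ.injective (Fin.ext (by exact_mod_cast h1.symm))
  set τ : Equiv.Perm (Fin N) := Tuple.sort y
  have hmonoτ : Monotone (y ∘ τ) := Tuple.monotone_sort y
  have hge : ∀ n : Fin N, ((n : ℕ) : ℤ) ≤ y (τ n) :=
    le_of_strictMono_fin_int (y ∘ τ)
      (hmonoτ.strictMono_of_injective (hyinj.comp τ.injective)) (fun n => hy0 _)
  have hnB : ∀ n : Fin N, 0 ≤ ((n : ℕ) : ℤ) - B n := fun n => by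
    have := hle n
    simp only [hB]; omega
  have hterm : ∀ n ∈ (Finset.univ : Finset (Fin N)),
      (((n : ℕ) : ℤ) - B n) ^ 2 ≤ (y (τ n) - B n) ^ 2 := fun n _ =>
    pow_le_pow_left₀ (hnB n) (by linarith [hge n]) 2
  have hsort := Finset.sum_le_sum hterm
  have hvary : Monovary (y ∘ τ) B := hmonoτ.monovary hBmono
  have hcomp : (y ∘ τ) ∘ τ.symm = y := by ext n; simp
  have hrearr : ∑ n, y n * B n ≤ ∑ n, y (τ n) * B n := by
    simpa using hvary.sum_comp_perm_mul_le_sum_mul (σ := τ.symm)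
  have hrearr_eq : ∑ n, y n * B n = ∑ n, y (τ n) * B n ↔ Monovary y B := by
    simpa [hcomp] using hvary.sum_comp_perm_mul_eq_sum_mul_iff (σ := τ.symm)
  have hexp := sum_sub_sq_eq_comp_perm y B τ
  have hlift : ∑ n, ((((σ n : ℕ) : ℤ) - B n) % (N : ℤ)) ^ 2 = ∑ n, (y n - B n) ^ 2 := by
    simp [hy]
  change (∑ n, ((((σ n : ℕ) : ℤ) - B n) % (N : ℤ)) ^ 2 ≥ ∑ n : Fin N, (((n : ℕ) : ℤ) - B n) ^ 2) ∧
    (∑ n, ((((σ n : ℕ) : ℤ) - B n) % (N : ℤ)) ^ 2 = ∑ n : Fin N, (((n : ℕ) : ℤ) - B n) ^ 2 ↔ _)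
  refine ⟨by rw [hlift]; linarith, fun heq => ?_, fun hb => ?_⟩
  · rw [hlift] at heq
    have hyB : Monovary y B := hrearr_eq.1 (by linarith)
    have hyτ : ∀ n : Fin N, y (τ n) = ((n : ℕ) : ℤ) := fun n => by
      have h := (Finset.sum_eq_sum_iff_of_le hterm).1 (by linarith) n (Finset.mem_univ n)
      have := (pow_left_inj₀ (hnB n) (by linarith [hge n, hnB n]) two_ne_zero).1 h
      linarith
    have hστ : ∀ n, σ (τ n) = n := fun n => by
      have h := hymod (τ n)
      rw [hyτ, Int.emod_eq_of_lt (Int.natCast_nonneg _) (by exact_mod_cast n.isLt)] at h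
      exact Fin.ext (by exact_mod_cast h.symm)
    have hbτ : Monotone (b ∘ τ) := fun i j hij => by
      by_contra! hlt
      have h : y (τ j) ≤ y (τ i) := hyB (by simpa [hB] using hlt)
      rw [hyτ, hyτ] at h
      have hji : j ≤ i := by exact_mod_cast h
      rw [le_antisymm hij hji] at hlt
      exact lt_irrefl _ hlt
    have huniq : b ∘ τ = b ∘ (1 : Equiv.Perm (Fin N)) :=
      Tuple.unique_monotone hbτ (by simpa using hmono)
    intro n
    have hτσ : τ (σ n) = n := σ.injective (hστ (σ n))
    have h := congrFun huniq (σ n)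
    simp only [Function.comp_apply, hτσ, Equiv.Perm.one_apply] at h
    exact h.symm
  -- Here `σ n ≥ b (σ n) = b n`, so no reduction takes place and the sum is merely reindexed.
  · rw [← Equiv.sum_comp σ (fun n : Fin N => (((n : ℕ) : ℤ) - B n) ^ 2)]
    refine Finset.sum_congr rfl fun n _ => ?_
    have hBσ : B (σ n) = B n := by simp only [hB, hb n]
    have h0 := hnB (σ n)
    rw [hBσ] at h0 ⊢
    have hlt : ((σ n : ℕ) : ℤ) < N := by exact_mod_cast (σ n).isLt
    have hBn : 0 ≤ B n := Int.natCast_nonneg _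
    rw [Int.emod_eq_of_lt h0 (by linarith)]
end

section
/- Let N be a positive integer and φ ∈ ℂ^N. The Gabor system (φ, (ℤ/Nℤ)²) is in general linear position if and only if for every f ∈ ℂ^N with f ≠ 0, the short-time Fourier transform V_φ f has at least N² − N + 1 nonzero entries, i.e., #{(κ,λ) ∈ (ℤ/Nℤ)² : ⟨f, π(κ,λ)φ⟩ ≠ 0} ≥ N² − N + 1. -/
/-- The standard Hermitian inner product `⟨f,g⟩ = ∑_j f_j conj(g_j)` on `ℂ^N`. -/
noncomputable def sip (N : ℕ) [NeZero N] (f g : ZMod N → ℂ) : ℂ :=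
  ∑ j : ZMod N, f j * (starRingEnd ℂ) (g j)

/-- A family spans iff its orthogonal complement is trivial. If it does not span, a nonzero
functional `l` killing the span gives the nonzero orthogonal vector `f_j = conj (l e_j)`. -/
theorem span_eq_top_iff_sip (N : ℕ) [NeZero N] {ι : Type*} (v : ι → ZMod N → ℂ) :
    Submodule.span ℂ (Set.range v) = ⊤ ↔ ∀ f, (∀ i, sip N f (v i) = 0) → f = 0 := by
  constructor
  · intro h f hf
    have key : ∀ g ∈ Submodule.span ℂ (Set.range v), sip N f g = 0 := by
      intro g hg
      induction hg using Submodule.span_induction with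
      | mem x hx => obtain ⟨i, rfl⟩ := hx; exact hf i
      | zero => simp [sip]
      | add x y _ _ hx hy =>
        simp only [sip, Pi.add_apply, map_add, mul_add, Finset.sum_add_distrib] at *
        rw [hx, hy, add_zero]
      | smul a x _ hx =>
        simp only [sip, Pi.smul_apply, smul_eq_mul, map_mul, mul_left_comm _ (starRingEnd ℂ a),
          ← Finset.mul_sum] at *
        rw [hx, mul_zero]
    have h0 : ∑ j, f j * star (f j) = 0 := key f (h ▸ Submodule.mem_top)
    open scoped ComplexOrder in exact dotProduct_self_star_eq_zero.mp h0
  · intro h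
    by_contra hne
    obtain ⟨l, hl, hle⟩ := Submodule.exists_le_ker_of_lt_top _ (lt_top_iff_ne_top.mpr hne)
    have hsum : ∀ g, l g = ∑ j, g j * l (Pi.single j 1) := fun g => by
      conv_lhs => rw [pi_eq_sum_univ' g, map_sum]
      refine Finset.sum_congr rfl fun j _ => ?_
      rw [map_smul, smul_eq_mul]
    have hf := h (fun j => starRingEnd ℂ (l (Pi.single j 1))) fun i => by
      have h1 : l (v i) = 0 := hle (Submodule.subset_span ⟨i, rfl⟩)
      rw [hsum] at h1
      simpa [sip, mul_comm] using congrArg (starRingEnd ℂ) h1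
    apply hl
    ext j
    simpa using congrFun hf j

/-- `(φ, (ℤ/Nℤ)²)` is in general linear position iff for every `f ≠ 0` the short-time
Fourier transform `V_φ f(κ,λ) = ⟨f, π(κ,λ)φ⟩` has at least `N² - N + 1` nonzero entries. -/
theorem glp_iff_stft_support_large (N : ℕ) [NeZero N] (φ : ZMod N → ℂ) :
    InGeneralLinearPosition N φ ↔
      ∀ f : ZMod N → ℂ, f ≠ 0 →
        N ^ 2 - N + 1 ≤
          {p : ZMod N × ZMod N | sip N f (gabor N p.1 p.2 φ) ≠ 0}.ncard := by
  have hcard : Nat.card (ZMod N × ZMod N) = N ^ 2 := by simp [sq]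
  constructor
  · intro h f hf
    by_contra hlt
    have hc := Set.ncard_add_ncard_compl
      {p : ZMod N × ZMod N | sip N f (gabor N p.1 p.2 φ) ≠ 0}
    have hN : N ≤ N ^ 2 := Nat.le_self_pow two_ne_zero N
    have hZ : N ≤ ({p : ZMod N × ZMod N | sip N f (gabor N p.1 p.2 φ) ≠ 0}ᶜ).ncard := by omega
    rw [Set.ncard_eq_toFinset_card _ (Set.toFinite _)] at hZ
    obtain ⟨Λ, hΛ, hΛN⟩ := Finset.exists_subset_card_eq hZ
    refine hf ((span_eq_top_iff_sip N _).mp (h Λ hΛN).2 f ?_)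
    rintro ⟨p, hp⟩
    simpa using hΛ hp
  · intro h Λ hΛ
    have hspan : Submodule.span ℂ
        (Set.range fun p : {x // x ∈ Λ} => gabor N p.1.1 p.1.2 φ) = ⊤ := by
      rw [span_eq_top_iff_sip]
      intro f hf
      by_contra hne
      have h1 := h f hne
      have h2 : {p : ZMod N × ZMod N | sip N f (gabor N p.1 p.2 φ) ≠ 0} ⊆
          (Λ : Set (ZMod N × ZMod N))ᶜ := fun p hp hpΛ => hp (hf ⟨p, hpΛ⟩)
      have h3 := Set.ncard_le_ncard h2 (Set.toFinite _)
      have h4 := Set.ncard_add_ncard_compl (Λ : Set (ZMod N × ZMod N))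
      rw [Set.ncard_coe_finset, hΛ, hcard] at h4
      omega
    exact ⟨linearIndependent_of_top_le_span_of_card_eq_finrank hspan.ge (by simp [hΛ]), hspan⟩
end
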